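/- For every complex number q with |q| < 1, φ(q³)² = G(q³)·φ(q)·a(q) + q·H(q³)·φ(q)·b(q). (This identity is the reduced form of the branching rule for the level-1 E₆⁽¹⁾-module V^{Λ₀} with respect to F₄⁽¹⁾, Theorem 3.1 of the paper.) -/

import Mathlib

open scoped BigOperators

/-- The Euler function `φ(q) = ∏_{n=1}^∞ (1 - q^n)`. -/
noncomputable def eulerPhi (q : ℂ) : ℂ := ∏' n : ℕ, (1 - q ^ (n + 1))

/-- The first Rogers–Ramanujan series
`a(q) = ∏_{n=1}^∞ 1/((1 - q^{5n-2})(1 - q^{5n-3}))`. -/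
noncomputable def rrA (q : ℂ) : ℂ :=
  ∏' n : ℕ, ((1 - q ^ (5 * n + 3)) * (1 - q ^ (5 * n + 2)))⁻¹

/-- The second Rogers–Ramanujan series
`b(q) = ∏_{n=1}^∞ 1/((1 - q^{5n-1})(1 - q^{5n-4}))`. -/
noncomputable def rrB (q : ℂ) : ℂ :=
  ∏' n : ℕ, ((1 - q ^ (5 * n + 4)) * (1 - q ^ (5 * n + 1)))⁻¹

/-- `G(q) = ∏_{n=1}^∞ (1-q^{15n})(1-q^{15n-7})(1-q^{15n-8})
          - q ∏_{n=1}^∞ (1-q^{15n})(1-q^{15n-13})(1-q^{15n-2})`. -/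
noncomputable def Gf (q : ℂ) : ℂ :=
  (∏' n : ℕ, (1 - q ^ (15 * n + 15)) * (1 - q ^ (15 * n + 8)) * (1 - q ^ (15 * n + 7)))
  - q * ∏' n : ℕ, (1 - q ^ (15 * n + 15)) * (1 - q ^ (15 * n + 2)) * (1 - q ^ (15 * n + 13))

/-- `H(q) = ∏_{n=1}^∞ (1-q^{15n})(1-q^{15n-4})(1-q^{15n-11})
          + q ∏_{n=1}^∞ (1-q^{15n})(1-q^{15n-14})(1-q^{15n-1})`. -/
noncomputable def Hf (q : ℂ) : ℂ :=
  (∏' n : ℕ, (1 - q ^ (15 * n + 15)) * (1 - q ^ (15 * n + 11)) * (1 - q ^ (15 * n + 4)))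
  + q * ∏' n : ℕ, (1 - q ^ (15 * n + 15)) * (1 - q ^ (15 * n + 1)) * (1 - q ^ (15 * n + 14))

/-!
Let `t_j = (-1)^j q^{j(j+1)/2}`, which changes sign under `j ↦ -1 - j`, and sum `t_i t_j` over the
lattice points `(i, j)` with `i + j ≢ 2 (mod 3)`, in two ways.

By residue classes modulo 3: the class of `1` is its own mirror image, so its sum vanishes, while
the classes of `0` and `-1` have opposite sums. By the Jacobi triple product the class of `0` sums
to `φ(q³)`, and the whole sum is `2 φ(q³)²`.

By stripes `2i - j ≡ c (mod 15)`: the reflection pairs the ten admissible `c` into five pairs. As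
`(6, -3)` and `(1, 2)` are orthogonal, each stripe sum is a product of two theta functions. One of
the five products vanishes, and by the triple product the other four are the terms of
`G(q³) φ(q) a(q) + q H(q³) φ(q) b(q)`.
-/

open Filter Topology

section Triangular

/-- The triangular number `n(n+1)/2` of an integer `n`; it is a natural number because
`n(n+1) ≥ 0` for every integer `n`. -/
def triangular (n : ℤ) : ℕ := (n * (n + 1) / 2).toNat

theorem two_mul_triangular (n : ℤ) : 2 * (triangular n : ℤ) = n * (n + 1) := by
  have even_mul : 2 ∣ n * (n + 1) := even_iff_two_dvd.mp (Int.even_mul_succ_self n)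
  have nonneg : 0 ≤ n * (n + 1) := by
    rcases le_or_gt 0 n with h | h <;> nlinarith
  unfold triangular
  omega

theorem triangular_succ (n : ℤ) : (triangular (n + 1) : ℤ) = triangular n + (n + 1) := by
  linarith [two_mul_triangular n, two_mul_triangular (n + 1)]

theorem triangular_neg_one_sub (n : ℤ) : triangular (-1 - n) = triangular n := by
  have h := two_mul_triangular (-1 - n)
  rw [show (-1 - n) * (-1 - n + 1) = n * (n + 1) by ring, ← two_mul_triangular n] at h
  omega

theorem triangular_add_triangular_sub_one (n : ℤ) :
    ((triangular n + triangular (n - 1) : ℕ) : ℤ) = n * n := by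
  push_cast
  linarith [two_mul_triangular n, two_mul_triangular (n - 1)]

end Triangular

section ThetaTerm

variable {K : Type*} [Field K]

/-- The `j`-th term `a^{j(j+1)/2} b^{j(j-1)/2}` of Ramanujan's theta function `f(a, b)`. -/
def thetaTerm (a b : K) (j : ℤ) : K := a ^ triangular j * b ^ triangular (j - 1)

theorem thetaTerm_neg (a b : K) (j : ℤ) : thetaTerm a b (-j) = thetaTerm b a j := by
  rw [thetaTerm, thetaTerm, show -j = -1 - (j - 1) by ring, triangular_neg_one_sub,
    show -1 - (j - 1) - 1 = -1 - j by ring, triangular_neg_one_sub, mul_comm]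

theorem thetaTerm_succ {a b : K} (ha : a ≠ 0) (hb : b ≠ 0) (j : ℤ) :
    thetaTerm a b (j + 1) = a * (a * b) ^ j * thetaTerm a b j := by
  have hj := triangular_succ (j - 1)
  rw [sub_add_cancel] at hj
  simp only [thetaTerm, ← zpow_natCast, add_sub_cancel_right]
  rw [triangular_succ, hj, zpow_add₀ ha, zpow_add₀ hb, mul_zpow, zpow_add_one₀ ha]
  ring

theorem thetaTerm_natCast_succ (a b : K) (n : ℕ) :
    thetaTerm a b (n + 1) = a * (a * b) ^ n * thetaTerm a b n := by
  have h₁ : triangular (n + 1) = triangular n + (n + 1) := by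
    exact_mod_cast triangular_succ n
  have h₀ : triangular n = triangular (n - 1) + n := by
    have := triangular_succ (n - 1)
    rw [sub_add_cancel] at this
    exact_mod_cast this
  rw [thetaTerm, thetaTerm, add_sub_cancel_right, h₁, pow_add, h₀]
  ring

theorem thetaTerm_neg_pow (q : K) (r s : ℕ) (j : ℤ) :
    thetaTerm (-q ^ r) (-q ^ s) j =
      (-1) ^ j * q ^ (r * triangular j + s * triangular (j - 1)) := by
  have sign : (-1 : K) ^ (triangular j + triangular (j - 1)) = (-1) ^ j := by
    rw [← zpow_natCast, triangular_add_triangular_sub_one, zpow_mul]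
    rcases Int.even_or_odd j with h | h <;> simp [h.neg_one_zpow]
  rw [thetaTerm, neg_pow (q ^ r), neg_pow (q ^ s), ← sign]
  ring

/-- The term `(-1)^j q^{j(j+1)/2}`, which is antisymmetric under `j ↦ -1 - j`. -/
def triangularTerm (q : K) (j : ℤ) : K := (-1) ^ j * q ^ triangular j

theorem thetaTerm_neg_neg_one (q : K) (j : ℤ) : thetaTerm (-q) (-1) j = triangularTerm q j := by
  rw [triangularTerm]
  simpa using thetaTerm_neg_pow q 1 0 j

theorem triangularTerm_neg_one_sub (q : K) (j : ℤ) :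
    triangularTerm q (-1 - j) = -triangularTerm q j := by
  have sign : (-1 : K) ^ (-1 - j) = -(-1) ^ j := by
    rw [zpow_sub₀ (by simp), zpow_neg_one, div_eq_mul_inv, ← inv_zpow, inv_neg_one, neg_one_mul]
  rw [triangularTerm, triangularTerm, triangular_neg_one_sub, sign, neg_mul]

end ThetaTerm

section QPochhammer

variable {K : Type*} [Field K]

/-- The finite `q`-Pochhammer symbol `(a; p)_n = ∏_{k<n} (1 - a p^k)`. -/
def qPochhammer (a p : K) (n : ℕ) : K := ∏ k ∈ Finset.range n, (1 - a * p ^ k)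

theorem qPochhammer_succ (a p : K) (n : ℕ) :
    qPochhammer a p (n + 1) = qPochhammer a p n * (1 - a * p ^ n) :=
  Finset.prod_range_succ _ _

theorem qPochhammer_self_ne_zero {p : K} (hp : ∀ k : ℕ, p ^ (k + 1) ≠ 1) (n : ℕ) :
    qPochhammer p p n ≠ 0 :=
  Finset.prod_ne_zero_iff.mpr fun k _ => by
    rw [← pow_succ']
    exact sub_ne_zero.mpr (hp k).symm

/-- The reciprocal `1 / (p; p)_m`, extended by `0` to negative `m`, so that its recurrence in `m`
holds for all integers. -/
def invQFactorial (p : K) (m : ℤ) : K := if m < 0 then 0 else (qPochhammer p p m.toNat)⁻¹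

theorem invQFactorial_sub_one {p : K} (hp : ∀ k : ℕ, p ^ (k + 1) ≠ 1) (m : ℤ) :
    invQFactorial p (m - 1) = (1 - p ^ m) * invQFactorial p m := by
  rcases lt_trichotomy m 0 with h | rfl | h
  · simp [invQFactorial, h, show m - 1 < 0 by omega]
  · simp [invQFactorial]
  · obtain ⟨k, rfl⟩ : ∃ k : ℕ, m = k + 1 := ⟨(m - 1).toNat, by omega⟩
    have factor_ne_zero : 1 - p * p ^ k ≠ 0 := by
      rw [← pow_succ']
      exact sub_ne_zero.mpr (hp k).symm
    rw [add_sub_cancel_right, invQFactorial, invQFactorial, if_neg (by omega), if_neg (by omega),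
      Int.toNat_natCast, Int.toNat_natCast_add_one, qPochhammer_succ]
    have := qPochhammer_self_ne_zero hp k
    rw [show p ^ ((k : ℤ) + 1) = p * p ^ k by rw [← pow_succ']; norm_cast]
    field_simp

/-- The Gaussian binomial coefficient `[2n choose n+j]_p`, which vanishes for `|j| > n`. -/
def centralGaussBinom (p : K) (n : ℕ) (j : ℤ) : K :=
  qPochhammer p p (2 * n) * (invQFactorial p (n + j) * invQFactorial p (n - j))

theorem centralGaussBinom_zero (p : K) (j : ℤ) :
    centralGaussBinom p 0 j = if j = 0 then 1 else 0 := by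
  rcases lt_trichotomy j 0 with h | rfl | h
  · simp [centralGaussBinom, invQFactorial, h, h.ne]
  · simp [centralGaussBinom, invQFactorial, qPochhammer]
  · simp [centralGaussBinom, invQFactorial, h, h.ne']

theorem centralGaussBinom_succ {p : K} (hp₀ : p ≠ 0) (hp : ∀ k : ℕ, p ^ (k + 1) ≠ 1)
    (n : ℕ) (j : ℤ) :
    centralGaussBinom p (n + 1) j =
      (1 + p ^ (2 * n + 1)) * centralGaussBinom p n j
        + p ^ ((n : ℤ) + 1 - j) * centralGaussBinom p n (j - 1)
        + p ^ ((n : ℤ) + 1 + j) * centralGaussBinom p n (j + 1) := by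
  set x := p ^ ((n : ℤ) + 1 + j) with hx
  set y := p ^ ((n : ℤ) + 1 - j) with hy
  have hxy : p * p ^ (2 * n + 1) = x * y := by
    rw [← pow_succ', ← zpow_natCast, ← zpow_add₀ hp₀]
    congr 1
    push_cast
    ring
  have hxy' : p ^ (2 * n + 1) = x * y / p := by rw [eq_div_iff hp₀, mul_comm, hxy]
  have hx' : p ^ ((n : ℤ) + j) = x / p := by rw [div_eq_mul_inv, ← zpow_sub_one₀ hp₀]; ring_nf
  have hy' : p ^ ((n : ℤ) - j) = y / p := by rw [div_eq_mul_inv, ← zpow_sub_one₀ hp₀]; ring_nf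
  have left := invQFactorial_sub_one hp (n + 1 + j)
  have left' := invQFactorial_sub_one hp (n + j)
  have right := invQFactorial_sub_one hp (n + 1 - j)
  have right' := invQFactorial_sub_one hp (n - j)
  rw [show (n : ℤ) + 1 + j - 1 = n + j by ring, ← hx] at left
  rw [show (n : ℤ) + 1 - j - 1 = n - j by ring, ← hy] at right
  rw [hx', left] at left'
  rw [hy', right] at right'
  simp only [centralGaussBinom, Nat.cast_add_one]
  rw [show 2 * (n + 1) = 2 * n + 1 + 1 by ring, qPochhammer_succ, qPochhammer_succ,
    show (n : ℤ) + (j - 1) = n + j - 1 by ring, show (n : ℤ) - (j - 1) = n + 1 - j by ring,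
    show (n : ℤ) + (j + 1) = n + 1 + j by ring, show (n : ℤ) - (j + 1) = n - j - 1 by ring,
    left', right', left, right, hxy, ← pow_succ', hxy']
  field_simp
  ring

theorem centralGaussBinom_succ_mul_thetaTerm {a b : K} (ha : a ≠ 0) (hb : b ≠ 0)
    (hab : ∀ k : ℕ, (a * b) ^ (k + 1) ≠ 1) (n : ℕ) (j : ℤ) :
    centralGaussBinom (a * b) (n + 1) j * thetaTerm a b j =
      (1 + (a * b) ^ (2 * n + 1)) * (centralGaussBinom (a * b) n j * thetaTerm a b j)
        + a * (a * b) ^ n * (centralGaussBinom (a * b) n (j - 1) * thetaTerm a b (j - 1))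
        + b * (a * b) ^ n * (centralGaussBinom (a * b) n (j + 1) * thetaTerm a b (j + 1)) := by
  have hp₀ : a * b ≠ 0 := mul_ne_zero ha hb
  have shift_lower : a * (a * b) ^ n * thetaTerm a b (j - 1) =
      (a * b) ^ ((n : ℤ) + 1 - j) * thetaTerm a b j := by
    have step := thetaTerm_succ ha hb (j - 1)
    rw [sub_add_cancel] at step
    rw [step, ← zpow_natCast, show (n : ℤ) = (n + 1 - j) + (j - 1) by ring, zpow_add₀ hp₀,
      show (n : ℤ) + 1 - j + (j - 1) + 1 - j = n + 1 - j by ring]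
    ring
  have shift_upper : b * (a * b) ^ n * thetaTerm a b (j + 1) =
      (a * b) ^ ((n : ℤ) + 1 + j) * thetaTerm a b j := by
    rw [thetaTerm_succ ha hb, zpow_add₀ hp₀, zpow_add_one₀ hp₀, zpow_natCast]
    ring
  rw [centralGaussBinom_succ hp₀ hab]
  linear_combination -centralGaussBinom (a * b) n (j - 1) * shift_lower
    - centralGaussBinom (a * b) n (j + 1) * shift_upper

/-- MacMahon's finite form of the Jacobi triple product. -/
theorem hasSum_centralGaussBinom_mul_thetaTerm [TopologicalSpace K] [IsTopologicalRing K]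
    {a b : K} (ha : a ≠ 0) (hb : b ≠ 0) (hab : ∀ k : ℕ, (a * b) ^ (k + 1) ≠ 1) (n : ℕ) :
    HasSum (fun j => centralGaussBinom (a * b) n j * thetaTerm a b j)
      (qPochhammer (-a) (a * b) n * qPochhammer (-b) (a * b) n) := by
  induction n with
  | zero =>
    simp only [centralGaussBinom_zero, ite_mul, zero_mul, one_mul]
    convert hasSum_ite_eq (0 : ℤ) (1 : K) using 2 with j
    · split_ifs with hj <;> simp [hj, thetaTerm, triangular]
    · simp [qPochhammer]
  | succ n ih =>
    have middle := ih.mul_left (1 + (a * b) ^ (2 * n + 1))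
    have lower := ((Equiv.subRight (1 : ℤ)).hasSum_iff.mpr ih).mul_left (a * (a * b) ^ n)
    have upper := ((Equiv.addRight (1 : ℤ)).hasSum_iff.mpr ih).mul_left (b * (a * b) ^ n)
    have product : qPochhammer (-a) (a * b) (n + 1) * qPochhammer (-b) (a * b) (n + 1) =
        (1 + (a * b) ^ (2 * n + 1)) * (qPochhammer (-a) (a * b) n * qPochhammer (-b) (a * b) n)
          + a * (a * b) ^ n * (qPochhammer (-a) (a * b) n * qPochhammer (-b) (a * b) n)
          + b * (a * b) ^ n * (qPochhammer (-a) (a * b) n * qPochhammer (-b) (a * b) n) := by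
      rw [qPochhammer_succ, qPochhammer_succ]
      ring
    simp only [product, centralGaussBinom_succ_mul_thetaTerm ha hb hab]
    exact (middle.add lower).add upper

end QPochhammer

section QPochhammerInf

variable {K : Type*} [NormedField K]

/-- The infinite `q`-Pochhammer symbol `(a; p)_∞ = ∏_{k ≥ 0} (1 - a p^k)`. -/
noncomputable def qPochhammerInf (a p : K) : K := ∏' k : ℕ, (1 - a * p ^ k)

theorem norm_pow_lt_one {p : K} (hp : ‖p‖ < 1) {m : ℕ} (hm : m ≠ 0) : ‖p ^ m‖ < 1 :=
  norm_pow p m ▸ pow_lt_one₀ (norm_nonneg p) hp hm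

theorem pow_succ_ne_one_of_norm_lt_one {p : K} (hp : ‖p‖ < 1) (k : ℕ) : p ^ (k + 1) ≠ 1 := fun h =>
  (norm_pow_lt_one hp k.succ_ne_zero).ne (by rw [h, norm_one])

theorem eulerPhi_eq_qPochhammerInf (q : ℂ) : eulerPhi q = qPochhammerInf q q := by
  simp only [eulerPhi, qPochhammerInf, pow_succ']

theorem summable_norm_neg_mul_pow (a : K) {p : K} (hp : ‖p‖ < 1) :
    Summable fun k : ℕ => ‖-(a * p ^ k)‖ := by
  simp only [norm_neg, norm_mul, norm_pow]
  exact (summable_geometric_of_lt_one (norm_nonneg p) hp).mul_left ‖a‖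

variable [CompleteSpace K]

theorem multipliable_one_sub_mul_pow (a : K) {p : K} (hp : ‖p‖ < 1) :
    Multipliable fun k : ℕ => 1 - a * p ^ k := by
  simpa only [sub_eq_add_neg] using
    multipliable_one_add_of_summable (summable_norm_neg_mul_pow a hp)

theorem tendsto_qPochhammer (a : K) {p : K} (hp : ‖p‖ < 1) :
    Tendsto (qPochhammer a p) atTop (𝓝 (qPochhammerInf a p)) :=
  (multipliable_one_sub_mul_pow a hp).tendsto_prod_tprod_nat

theorem qPochhammerInf_ne_zero {a p : K} (hp : ‖p‖ < 1) (ha : ∀ k : ℕ, a * p ^ k ≠ 1) :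
    qPochhammerInf a p ≠ 0 := by
  simp only [qPochhammerInf, sub_eq_add_neg]
  refine tprod_one_add_ne_zero_of_summable (fun k => ?_) (summable_norm_neg_mul_pow a hp)
  rw [← sub_eq_add_neg]
  exact sub_ne_zero.mpr (ha k).symm

theorem qPochhammerInf_self_ne_zero {p : K} (hp : ‖p‖ < 1) : qPochhammerInf p p ≠ 0 :=
  qPochhammerInf_ne_zero hp fun k => by
    rw [← pow_succ']
    exact pow_succ_ne_one_of_norm_lt_one hp k

theorem qPochhammerInf_eq_prod_range (a : K) {p : K} (hp : ‖p‖ < 1) (k : ℕ) [NeZero k] :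
    qPochhammerInf a p = ∏ i ∈ Finset.range k, qPochhammerInf (a * p ^ i) (p ^ k) := by
  have hpk : ‖p ^ k‖ < 1 := norm_pow_lt_one hp (NeZero.ne k)
  obtain ⟨e, he⟩ : ∃ e : Fin k × ℕ ≃ ℕ, ∀ i n, e (i, n) = i + k * n :=
    ⟨(Equiv.prodComm _ _).trans (Nat.divModEquiv k).symm, fun i n => by simp [mul_comm, add_comm]⟩
  have term_eq (i : Fin k) (n : ℕ) :
      1 - a * p ^ e (i, n) = 1 - a * p ^ (i : ℕ) * (p ^ k) ^ n := by
    rw [he, pow_add, pow_mul, mul_assoc]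
  have multipliable : Multipliable fun x => 1 - a * p ^ e x :=
    (e.multipliable_iff (f := fun n => 1 - a * p ^ n)).mpr (multipliable_one_sub_mul_pow a hp)
  calc qPochhammerInf a p = ∏' x, (1 - a * p ^ e x) := (e.tprod_eq _).symm
    _ = ∏' (i : Fin k) (n : ℕ), (1 - a * p ^ e (i, n)) :=
        multipliable.tprod_prod' fun i => by
          simp only [term_eq]
          exact multipliable_one_sub_mul_pow _ hpk
    _ = ∏ i ∈ Finset.range k, qPochhammerInf (a * p ^ i) (p ^ k) := by
        simp only [term_eq, tprod_fintype, qPochhammerInf, Finset.prod_range]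

end QPochhammerInf

section RamanujanTheta

variable {K : Type*} [NormedField K]

/-- Ramanujan's theta function `f(a, b) = ∑_{j ∈ ℤ} a^{j(j+1)/2} b^{j(j-1)/2}`. -/
noncomputable def ramanujanTheta (a b : K) : K := ∑' j : ℤ, thetaTerm a b j

theorem ramanujanTheta_comm (a b : K) : ramanujanTheta a b = ramanujanTheta b a := by
  rw [ramanujanTheta, ← (Equiv.neg ℤ).tsum_eq]
  simp only [Equiv.neg_apply, thetaTerm_neg, ramanujanTheta]

theorem ramanujanTheta_neg_neg_one [CharZero K] (q : K) : ramanujanTheta (-q) (-1) = 0 := by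
  have antisymmetric : ∑' j, triangularTerm q j = -∑' j, triangularTerm q j := by
    conv_lhs => rw [← (Equiv.subLeft (-1 : ℤ)).tsum_eq]
    simp only [Equiv.subLeft_apply, triangularTerm_neg_one_sub, tsum_neg]
  simpa only [ramanujanTheta, thetaTerm_neg_neg_one] using self_eq_neg.mp antisymmetric

theorem summable_norm_thetaTerm {a b : K} (hab : ‖a * b‖ < 1) :
    Summable fun j => ‖thetaTerm a b j‖ := by
  have half {a b : K} (hab : ‖a * b‖ < 1) : Summable fun n : ℕ => ‖thetaTerm a b n‖ := by
    have ratio_tendsto : Tendsto (fun n : ℕ => ‖a * (a * b) ^ n‖) atTop (𝓝 0) := by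
      simpa using ((tendsto_pow_atTop_nhds_zero_of_norm_lt_one hab).const_mul a).norm
    refine summable_of_ratio_norm_eventually_le (r := 1 / 2) (by norm_num) ?_
    filter_upwards [ratio_tendsto.eventually_le_const one_half_pos] with n hn
    rw [Nat.cast_succ, thetaTerm_natCast_succ, norm_norm, norm_norm, norm_mul]
    gcongr
  refine Summable.of_nat_of_neg (half hab) ?_
  simpa only [thetaTerm_neg] using half (mul_comm a b ▸ hab)

variable [CompleteSpace K]

theorem tendsto_invQFactorial {p : K} (hp : ‖p‖ < 1) :
    Tendsto (invQFactorial p) atTop (𝓝 (qPochhammerInf p p)⁻¹) := by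
  have toNat_tendsto : Tendsto Int.toNat atTop atTop :=
    tendsto_atTop.mpr fun n => (eventually_ge_atTop (n : ℤ)).mono fun m hm => by omega
  refine (((tendsto_qPochhammer p hp).inv₀ (qPochhammerInf_self_ne_zero hp)).comp
    toNat_tendsto).congr' ?_
  filter_upwards [eventually_ge_atTop 0] with m hm
  rw [invQFactorial, if_neg hm.not_gt, Function.comp_apply]

theorem exists_norm_centralGaussBinom_le {p : K} (hp : ‖p‖ < 1) :
    ∃ C, ∀ n j, ‖centralGaussBinom p n j‖ ≤ C := by
  have limit := tendsto_qPochhammer p hp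
  obtain ⟨A, hA⟩ := (Metric.isBounded_range_of_tendsto _ limit).exists_norm_le
  obtain ⟨B, hB⟩ := (Metric.isBounded_range_of_tendsto _
    (limit.inv₀ (qPochhammerInf_self_ne_zero hp))).exists_norm_le
  have A_nonneg : 0 ≤ A := (norm_nonneg _).trans (hA _ ⟨0, rfl⟩)
  have B_nonneg : 0 ≤ B := (norm_nonneg _).trans (hB _ ⟨0, rfl⟩)
  have invQFactorial_le (m : ℤ) : ‖invQFactorial p m‖ ≤ B := by
    rw [invQFactorial]
    split_ifs
    · simpa using B_nonneg
    · exact hB _ ⟨_, rfl⟩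
  refine ⟨A * (B * B), fun n j => ?_⟩
  rw [centralGaussBinom, norm_mul, norm_mul]
  gcongr
  exacts [hA _ ⟨_, rfl⟩, invQFactorial_le _, invQFactorial_le _]

theorem tendsto_centralGaussBinom {p : K} (hp : ‖p‖ < 1) (j : ℤ) :
    Tendsto (centralGaussBinom p · j) atTop (𝓝 (qPochhammerInf p p)⁻¹) := by
  have P_ne_zero := qPochhammerInf_self_ne_zero hp
  have double : Tendsto (fun n : ℕ => 2 * n) atTop atTop :=
    tendsto_id.const_mul_atTop' two_pos
  have plus : Tendsto (fun n : ℕ => (n : ℤ) + j) atTop atTop :=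
    tendsto_atTop_add_const_right _ j tendsto_natCast_atTop_atTop
  have minus : Tendsto (fun n : ℕ => (n : ℤ) - j) atTop atTop :=
    tendsto_atTop_add_const_right _ (-j) tendsto_natCast_atTop_atTop
  have limit := ((tendsto_qPochhammer p hp).comp double).mul
    (((tendsto_invQFactorial hp).comp plus).mul ((tendsto_invQFactorial hp).comp minus))
  rwa [mul_inv_cancel_left₀ P_ne_zero] at limit

theorem jacobi_triple_product {a b : K} (ha : a ≠ 0) (hb : b ≠ 0) (hab : ‖a * b‖ < 1) :
    ramanujanTheta a b =
      qPochhammerInf (-a) (a * b) * qPochhammerInf (-b) (a * b)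
        * qPochhammerInf (a * b) (a * b) := by
  obtain ⟨C, hC⟩ := exists_norm_centralGaussBinom_le hab
  have sum_limit : Tendsto (fun n => ∑' j, centralGaussBinom (a * b) n j * thetaTerm a b j) atTop
      (𝓝 (∑' j, (qPochhammerInf (a * b) (a * b))⁻¹ * thetaTerm a b j)) :=
    tendsto_tsum_of_dominated_convergence ((summable_norm_thetaTerm hab).mul_left C)
      (fun j => (tendsto_centralGaussBinom hab j).mul_const _)
      (.of_forall fun n j => by
        rw [norm_mul]
        gcongr
        exact hC n j)
  simp only [(hasSum_centralGaussBinom_mul_thetaTerm ha hb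
    (pow_succ_ne_one_of_norm_lt_one hab) _).tsum_eq, tsum_mul_left] at sum_limit
  have product_limit := (tendsto_qPochhammer (-a) hab).mul (tendsto_qPochhammer (-b) hab)
  rw [← tendsto_nhds_unique sum_limit product_limit, mul_comm, ramanujanTheta,
    mul_inv_cancel_left₀ (qPochhammerInf_self_ne_zero hab)]

end RamanujanTheta

section ProductForms

variable {K : Type*} [NormedField K] [CompleteSpace K] {q : K}

theorem hasProd_one_sub_pow (hq : ‖q‖ < 1) {m : ℕ} (hm : m ≠ 0) (r : ℕ) :
    HasProd (fun n : ℕ => 1 - q ^ (m * n + r)) (qPochhammerInf (q ^ r) (q ^ m)) := by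
  have := (multipliable_one_sub_mul_pow (q ^ r) (norm_pow_lt_one hq hm)).hasProd
  simpa only [qPochhammerInf, ← pow_mul, ← pow_add, add_comm r] using this

theorem qPochhammerInf_pow_ne_zero (hq : ‖q‖ < 1) {m r : ℕ} (hm : m ≠ 0) (hr : r ≠ 0) :
    qPochhammerInf (q ^ r) (q ^ m) ≠ 0 :=
  qPochhammerInf_ne_zero (norm_pow_lt_one hq hm) fun k => by
    obtain ⟨r, rfl⟩ := Nat.exists_eq_add_one_of_ne_zero hr
    rw [← pow_mul, ← pow_add, Nat.add_right_comm]
    exact pow_succ_ne_one_of_norm_lt_one hq _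

theorem ramanujanTheta_neg_pow (hq₀ : q ≠ 0) (hq : ‖q‖ < 1) {r s m : ℕ} (hm : m ≠ 0)
    (hrs : r + s = m) :
    ramanujanTheta (-q ^ r) (-q ^ s) =
      qPochhammerInf (q ^ m) (q ^ m) * qPochhammerInf (q ^ r) (q ^ m)
        * qPochhammerInf (q ^ s) (q ^ m) := by
  have base : -q ^ r * -q ^ s = q ^ m := by rw [neg_mul_neg, ← pow_add, hrs]
  rw [jacobi_triple_product (neg_ne_zero.mpr (pow_ne_zero r hq₀))
    (neg_ne_zero.mpr (pow_ne_zero s hq₀)) (base ▸ norm_pow_lt_one hq hm), base, neg_neg, neg_neg]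
  ring

theorem tprod_eq_ramanujanTheta (hq₀ : q ≠ 0) (hq : ‖q‖ < 1) {r s m : ℕ} (hm : m ≠ 0)
    (hrs : r + s = m) :
    ∏' n : ℕ, (1 - q ^ (m * n + m)) * (1 - q ^ (m * n + r)) * (1 - q ^ (m * n + s)) =
      ramanujanTheta (-q ^ r) (-q ^ s) := by
  rw [ramanujanTheta_neg_pow hq₀ hq hm hrs]
  exact (((hasProd_one_sub_pow hq hm m).mul (hasProd_one_sub_pow hq hm r)).mul
    (hasProd_one_sub_pow hq hm s)).tprod_eq

theorem tprod_inv_eq_qPochhammerInf (hq : ‖q‖ < 1) {r s m : ℕ} (hm : m ≠ 0) (hr : r ≠ 0)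
    (hs : s ≠ 0) :
    ∏' n : ℕ, ((1 - q ^ (m * n + r)) * (1 - q ^ (m * n + s)))⁻¹ =
      (qPochhammerInf (q ^ r) (q ^ m) * qPochhammerInf (q ^ s) (q ^ m))⁻¹ :=
  (((hasProd_one_sub_pow hq hm r).mul (hasProd_one_sub_pow hq hm s)).inv₀
    (mul_ne_zero (qPochhammerInf_pow_ne_zero hq hm hr)
      (qPochhammerInf_pow_ne_zero hq hm hs))).tprod_eq

end ProductForms

section RogersRamanujan

variable {q : ℂ}

theorem eulerPhi_eq_prod_range (hq : ‖q‖ < 1) (m : ℕ) [NeZero m] :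
    eulerPhi q = ∏ i ∈ Finset.range m, qPochhammerInf (q ^ (i + 1)) (q ^ m) := by
  simp only [eulerPhi_eq_qPochhammerInf, qPochhammerInf_eq_prod_range q hq m, pow_succ']

theorem eulerPhi_eq_ramanujanTheta (hq₀ : q ≠ 0) (hq : ‖q‖ < 1) :
    eulerPhi q = ramanujanTheta (-q ^ 2) (-q ^ 1) := by
  rw [ramanujanTheta_neg_pow hq₀ hq three_ne_zero rfl, eulerPhi_eq_prod_range hq 3]
  simp only [Finset.prod_range_succ, Finset.prod_range_zero, Nat.reduceAdd]
  ring

theorem eulerPhi_mul_rrA (hq₀ : q ≠ 0) (hq : ‖q‖ < 1) :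
    eulerPhi q * rrA q = ramanujanTheta (-q ^ 4) (-q ^ 1) := by
  have ne_zero := mul_ne_zero
    (qPochhammerInf_pow_ne_zero hq (m := 5) (by norm_num) three_ne_zero)
    (qPochhammerInf_pow_ne_zero hq (m := 5) (by norm_num) two_ne_zero)
  rw [rrA, tprod_inv_eq_qPochhammerInf hq (by norm_num) three_ne_zero two_ne_zero,
    mul_inv_eq_iff_eq_mul₀ ne_zero, ramanujanTheta_neg_pow hq₀ hq (m := 5) (by norm_num) rfl,
    eulerPhi_eq_prod_range hq 5]
  simp only [Finset.prod_range_succ, Finset.prod_range_zero, Nat.reduceAdd]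
  ring

theorem eulerPhi_mul_rrB (hq₀ : q ≠ 0) (hq : ‖q‖ < 1) :
    eulerPhi q * rrB q = ramanujanTheta (-q ^ 3) (-q ^ 2) := by
  have ne_zero := mul_ne_zero
    (qPochhammerInf_pow_ne_zero hq (m := 5) (by norm_num) four_ne_zero)
    (qPochhammerInf_pow_ne_zero hq (m := 5) (by norm_num) one_ne_zero)
  rw [rrB, tprod_inv_eq_qPochhammerInf hq (by norm_num) four_ne_zero one_ne_zero,
    mul_inv_eq_iff_eq_mul₀ ne_zero, ramanujanTheta_neg_pow hq₀ hq (m := 5) (by norm_num) rfl,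
    eulerPhi_eq_prod_range hq 5]
  simp only [Finset.prod_range_succ, Finset.prod_range_zero, Nat.reduceAdd]
  ring

theorem Gf_eq_ramanujanTheta (hq₀ : q ≠ 0) (hq : ‖q‖ < 1) :
    Gf q = ramanujanTheta (-q ^ 8) (-q ^ 7) - q * ramanujanTheta (-q ^ 2) (-q ^ 13) := by
  rw [Gf, tprod_eq_ramanujanTheta hq₀ hq (m := 15) (by norm_num) rfl,
    tprod_eq_ramanujanTheta hq₀ hq (m := 15) (by norm_num) rfl]

theorem Hf_eq_ramanujanTheta (hq₀ : q ≠ 0) (hq : ‖q‖ < 1) :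
    Hf q = ramanujanTheta (-q ^ 11) (-q ^ 4) + q * ramanujanTheta (-q ^ 1) (-q ^ 14) := by
  rw [Hf, tprod_eq_ramanujanTheta hq₀ hq (m := 15) (by norm_num) rfl,
    tprod_eq_ramanujanTheta hq₀ hq (m := 15) (by norm_num) rfl]

end RogersRamanujan

section LatticeSum

variable {K : Type*} [NormedField K] {q : K}

/-- The residue class of `a` modulo `m`. -/
def residueClass (m a : ℤ) : Set ℤ := {j | j ≡ a [ZMOD m]}

/-- The sum of `(-1)^{i+j} q^{i(i+1)/2 + j(j+1)/2}` over the lattice points `(i, j) ∈ S`. -/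
noncomputable def latticeSum (q : K) (S : Set (ℤ × ℤ)) : K :=
  ∑' x : S, triangularTerm q x.1.1 * triangularTerm q x.1.2

theorem summable_norm_triangularTerm (hq : ‖q‖ < 1) :
    Summable fun j => ‖triangularTerm q j‖ := by
  simpa only [thetaTerm_neg_neg_one] using
    summable_norm_thetaTerm (a := -q) (b := -1) (by simpa using hq)

theorem latticeSum_preimage_neg_one_sub (q : K) (S : Set (ℤ × ℤ)) :
    latticeSum q ((fun x => (-1 - x.1, -1 - x.2)) ⁻¹' S) = latticeSum q S := by
  let reflection := (Equiv.subLeft (-1 : ℤ)).prodCongr (Equiv.subLeft (-1 : ℤ))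
  let restricted : (fun x : ℤ × ℤ => (-1 - x.1, -1 - x.2)) ⁻¹' S ≃ S :=
    reflection.subtypeEquiv fun _ => Iff.rfl
  refine Eq.trans (tsum_congr fun x => ?_) (restricted.tsum_eq _)
  change _ = triangularTerm q (-1 - x.1.1) * triangularTerm q (-1 - x.1.2)
  rw [triangularTerm_neg_one_sub, triangularTerm_neg_one_sub, neg_mul_neg]

theorem tsum_residueClass_neg_one_sub (q : K) (m a : ℤ) :
    ∑' j : residueClass m (-1 - a), triangularTerm q j =
      -∑' j : residueClass m a, triangularTerm q j := by
  have reflection_mem (j : ℤ) :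
      j ∈ residueClass m a ↔ Equiv.subLeft (-1 : ℤ) j ∈ residueClass m (-1 - a) := by
    simp [residueClass, Int.modEq_iff_dvd, ← dvd_neg (b := a - j)]
  rw [← tsum_neg]
  refine ((Equiv.subtypeEquiv _ reflection_mem).tsum_eq _).symm.trans (tsum_congr fun j => ?_)
  exact triangularTerm_neg_one_sub q j

/-- The lattice points `(i, j)` with `2i - j ≡ c (mod 15)`: a coset of the lattice spanned by
`(6, -3)` and `(1, 2)`. -/
def stripe (c : ℤ) : Set (ℤ × ℤ) := {x | 2 * x.1 - x.2 ≡ c [ZMOD 15]}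

theorem latticeSum_stripe_neg_one_sub (q : K) (c : ℤ) :
    latticeSum q (stripe (-1 - c)) = latticeSum q (stripe c) := by
  rw [← latticeSum_preimage_neg_one_sub]
  congr 1
  ext x
  simp only [stripe, Set.mem_preimage, Set.mem_ofPred_eq, Int.ModEq]
  omega

-- The vectors `(6, -3)` and `(1, 2)` are orthogonal, so in the coordinates
-- `(i, j) = (u, v) + n (6, -3) + m (1, 2)` of a stripe the exponent of `q` separates.
theorem triangularTerm_mul_triangularTerm_eq (q : K) {u v : ℤ} {r s r' s' : ℕ}
    (hr : (r : ℤ) = 8 + (2 * u - v)) (hs : (s : ℤ) = 7 - (2 * u - v))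
    (hr' : (r' : ℤ) = 4 + (u + 2 * v)) (hs' : (s' : ℤ) = 1 - (u + 2 * v)) (n m : ℤ) :
    triangularTerm q (u + 6 * n + m) * triangularTerm q (v - 3 * n + 2 * m) =
      triangularTerm q u * triangularTerm q v *
        (thetaTerm (-(q ^ 3) ^ r) (-(q ^ 3) ^ s) n * thetaTerm (-q ^ r') (-q ^ s') m) := by
  have sign : (-1 : K) ^ (u + 6 * n + m) * (-1) ^ (v - 3 * n + 2 * m) =
      (-1) ^ u * (-1) ^ v * ((-1) ^ n * (-1) ^ m) := by
    simp only [← zpow_add₀ (neg_ne_zero.mpr (one_ne_zero (α := K)))]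
    rw [show u + 6 * n + m + (v - 3 * n + 2 * m) = u + v + (n + m) + 2 * (n + m) by ring,
      zpow_add₀ (by simp), (even_two_mul _).neg_one_zpow, mul_one]
  have exponent : triangular (u + 6 * n + m) + triangular (v - 3 * n + 2 * m) =
      triangular u + triangular v + (3 * (r * triangular n + s * triangular (n - 1))
        + (r' * triangular m + s' * triangular (m - 1))) := by
    zify
    refine mul_left_cancel₀ two_ne_zero ?_
    linear_combination two_mul_triangular (u + 6 * n + m) + two_mul_triangular (v - 3 * n + 2 * m)
      - two_mul_triangular u - two_mul_triangular v
      - 3 * r * two_mul_triangular n - 3 * s * two_mul_triangular (n - 1)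
      - r' * two_mul_triangular m - s' * two_mul_triangular (m - 1)
      - 3 * n * (n + 1) * hr - 3 * n * (n - 1) * hs - m * (m + 1) * hr' - m * (m - 1) * hs'
  simp only [thetaTerm_neg_pow, triangularTerm]
  rw [mul_mul_mul_comm, sign, ← pow_add, exponent, pow_add, pow_add, pow_add, pow_mul]
  ring

variable [CompleteSpace K]

theorem summable_triangularTerm_mul (hq : ‖q‖ < 1) :
    Summable fun x : ℤ × ℤ => triangularTerm q x.1 * triangularTerm q x.2 :=
  summable_mul_of_summable_norm (summable_norm_triangularTerm hq) (summable_norm_triangularTerm hq)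

theorem latticeSum_prod (hq : ‖q‖ < 1) (S T : Set ℤ) :
    latticeSum q (S ×ˢ T) = (∑' i : S, triangularTerm q i) * ∑' j : T, triangularTerm q j := by
  have summable := summable_norm_triangularTerm hq
  refine Eq.trans ?_ (tsum_mul_tsum_of_summable_norm (summable.subtype S) (summable.subtype T)).symm
  exact ((Equiv.Set.prod S T).symm.tsum_eq _).symm

theorem latticeSum_biUnion (hq : ‖q‖ < 1) {ι : Type*} (s : Finset ι) {S : ι → Set (ℤ × ℤ)}
    (hS : (s : Set ι).PairwiseDisjoint S) :
    latticeSum q (⋃ i ∈ s, S i) = ∑ i ∈ s, latticeSum q (S i) :=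
  Summable.tsum_finset_bUnion_disjoint hS fun i _ => (summable_triangularTerm_mul hq).subtype (S i)

theorem latticeSum_stripe (hq : ‖q‖ < 1) {u v : ℤ} {r s r' s' : ℕ}
    (hr : (r : ℤ) = 8 + (2 * u - v)) (hs : (s : ℤ) = 7 - (2 * u - v))
    (hr' : (r' : ℤ) = 4 + (u + 2 * v)) (hs' : (s' : ℤ) = 1 - (u + 2 * v)) :
    latticeSum q (stripe (2 * u - v)) = triangularTerm q u * triangularTerm q v *
      (ramanujanTheta (-(q ^ 3) ^ r) (-(q ^ 3) ^ s) * ramanujanTheta (-q ^ r') (-q ^ s')) := by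
  let point (x : ℤ × ℤ) : ℤ × ℤ := (u + 6 * x.1 + x.2, v - 3 * x.1 + 2 * x.2)
  have point_injective : Function.Injective point := fun x y h => by
    simp only [point, Prod.mk.injEq] at h
    ext <;> omega
  have range_point : Set.range point = stripe (2 * u - v) := by
    ext ⟨i, j⟩
    simp only [point, stripe, Set.mem_range, Prod.mk.injEq, Set.mem_ofPred_eq]
    constructor
    · rintro ⟨⟨n, m⟩, rfl, rfl⟩
      exact Int.modEq_iff_dvd.mpr ⟨-n, by ring⟩
    · intro h
      obtain ⟨n, hn⟩ := Int.modEq_iff_dvd.mp h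
      exact ⟨(-n, i - u + 6 * n), by ring, by linarith⟩
  have summable {x : K} (hx : ‖x‖ < 1) {k l : ℕ} (h : k + l ≠ 0) :
      Summable fun j => ‖thetaTerm (-x ^ k) (-x ^ l) j‖ :=
    summable_norm_thetaTerm (by simpa only [neg_mul_neg, ← pow_add] using norm_pow_lt_one hx h)
  rw [← range_point, latticeSum, tsum_range (fun x : ℤ × ℤ => triangularTerm q x.1 *
    triangularTerm q x.2) point_injective, ramanujanTheta, ramanujanTheta,
    tsum_mul_tsum_of_summable_norm (summable (norm_pow_lt_one hq three_ne_zero) (by omega))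
      (summable hq (by omega)), ← tsum_mul_left]
  exact tsum_congr fun x =>
    triangularTerm_mul_triangularTerm_eq q hr hs hr' hs' x.1 x.2

end LatticeSum

section DoubleCount

variable {K : Type*} [NormedField K] {q : K}

theorem tsum_residueClass_three_zero (q : K) :
    ∑' j : residueClass 3 0, triangularTerm q j = ramanujanTheta (-(q ^ 3) ^ 2) (-(q ^ 3) ^ 1) := by
  have range_eq : Set.range (fun j : ℤ => 3 * j) = residueClass 3 0 := by
    ext j
    simp only [residueClass, Set.mem_range, Set.mem_ofPred_eq, Int.modEq_zero_iff_dvd]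
    exact ⟨fun ⟨k, hk⟩ => ⟨k, hk.symm⟩, fun ⟨k, hk⟩ => ⟨k, hk.symm⟩⟩
  rw [← range_eq, tsum_range (triangularTerm q) (mul_right_injective₀ three_ne_zero),
    ramanujanTheta]
  refine tsum_congr fun j => ?_
  have sign : (-1 : K) ^ (3 * j) = (-1) ^ j := by
    rw [zpow_mul]
    norm_num
  have exponent : triangular (3 * j) = 3 * (2 * triangular j + 1 * triangular (j - 1)) := by
    zify
    refine mul_left_cancel₀ two_ne_zero ?_
    linear_combination two_mul_triangular (3 * j) - 6 * two_mul_triangular j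
      - 3 * two_mul_triangular (j - 1)
  rw [thetaTerm_neg_pow, triangularTerm, sign, exponent, pow_mul]

theorem latticeSum_eq_two_mul_sum_stripe [CompleteSpace K] (hq : ‖q‖ < 1) :
    latticeSum q {x | ¬x.1 + x.2 ≡ 2 [ZMOD 3]} =
      2 * ∑ c ∈ {0, 5, 3, -7, 2}, latticeSum q (stripe c) := by
  let lower : Finset ℤ := {0, 5, 3, -7, 2}
  let upper : Finset ℤ := lower.map (Equiv.subLeft (-1)).toEmbedding
  have upper_eq : upper = {-1, -6, -4, 6, -3} := by decide
  have union_eq : ⋃ c ∈ lower ∪ upper, stripe c = {x | ¬x.1 + x.2 ≡ 2 [ZMOD 3]} := by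
    ext x
    simp only [lower, upper_eq, stripe, Set.mem_iUnion, exists_prop, Finset.mem_union,
      Finset.mem_insert, Finset.mem_singleton, Set.mem_ofPred_eq, Int.ModEq, or_assoc,
      exists_eq_or_imp, exists_eq_left]
    omega
  have disjoint : ((lower ∪ upper : Finset ℤ) : Set ℤ).PairwiseDisjoint stripe := by
    intro c hc d hd hcd
    have separated : ∀ c ∈ lower ∪ upper, ∀ d ∈ lower ∪ upper, c ≠ d → c % 15 ≠ d % 15 := by
      decide
    exact Set.disjoint_left.mpr fun x hxc hxd =>
      separated c hc d hd hcd (hxc.symm.trans hxd)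
  rw [← union_eq, latticeSum_biUnion hq _ disjoint, Finset.sum_union (by decide), Finset.sum_map,
    two_mul]
  exact congrArg _ (Finset.sum_congr rfl fun c _ => latticeSum_stripe_neg_one_sub q c)

variable [CharZero K]

theorem tsum_residueClass_three_one (q : K) :
    ∑' j : residueClass 3 1, triangularTerm q j = 0 := by
  have same_class : residueClass 3 (-1 - 1) = residueClass 3 1 := by
    ext j
    simp only [residueClass, Set.mem_ofPred_eq, Int.ModEq]
    omega
  have antisymmetric := tsum_residueClass_neg_one_sub q 3 1
  rw [same_class] at antisymmetric
  exact self_eq_neg.mp antisymmetric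

theorem latticeSum_eq_two_mul_sq [CompleteSpace K] (hq : ‖q‖ < 1) :
    latticeSum q {x | ¬x.1 + x.2 ≡ 2 [ZMOD 3]} =
      2 * (∑' j : residueClass 3 0, triangularTerm q j) ^ 2 := by
  let boxes : Finset (ℤ × ℤ) := {(0, 0), (-1, -1), (0, 1), (1, 0), (1, -1), (-1, 1)}
  let box (a : ℤ × ℤ) : Set (ℤ × ℤ) := residueClass 3 a.1 ×ˢ residueClass 3 a.2
  have union_eq : ⋃ a ∈ boxes, box a = {x | ¬x.1 + x.2 ≡ 2 [ZMOD 3]} := by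
    ext x
    simp only [boxes, box, residueClass, Set.mem_iUnion, exists_prop, Finset.mem_insert,
      Finset.mem_singleton, exists_eq_or_imp, exists_eq_left, Set.mem_prod, Set.mem_ofPred_eq,
      Int.ModEq]
    omega
  have disjoint : (boxes : Set (ℤ × ℤ)).PairwiseDisjoint box := by
    intro a ha b hb hab
    have separated : ∀ a ∈ boxes, ∀ b ∈ boxes, a ≠ b → a.1 % 3 ≠ b.1 % 3 ∨ a.2 % 3 ≠ b.2 % 3 := by
      decide
    refine Set.disjoint_left.mpr fun x hxa hxb => ?_
    simp only [box, residueClass, Set.mem_prod, Set.mem_ofPred_eq, Int.ModEq] at hxa hxb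
    have := separated a ha b hb hab
    omega
  have class_neg_one := tsum_residueClass_neg_one_sub q 3 0
  rw [sub_zero] at class_neg_one
  rw [← union_eq, latticeSum_biUnion hq boxes disjoint]
  simp only [boxes, box, latticeSum_prod hq, class_neg_one, tsum_residueClass_three_one,
    Finset.sum_insert, Finset.sum_singleton, Finset.mem_insert, Finset.mem_singleton,
    Prod.mk.injEq, Int.reduceNeg, zero_eq_neg, one_ne_zero, and_self, zero_ne_one, and_false,
    and_true, or_self, not_false_eq_true, neg_eq_zero, reduceCtorEq]
  ring

end DoubleCount

theorem sq_eulerPhi_eq_sum_stripe {q : ℂ} (hq₀ : q ≠ 0) (hq : ‖q‖ < 1) :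
    eulerPhi (q ^ 3) ^ 2 = ∑ c ∈ {0, 5, 3, -7, 2}, latticeSum q (stripe c) := by
  rw [eulerPhi_eq_ramanujanTheta (pow_ne_zero 3 hq₀) (norm_pow_lt_one hq three_ne_zero),
    ← tsum_residueClass_three_zero]
  exact mul_left_cancel₀ two_ne_zero
    ((latticeSum_eq_two_mul_sq hq).symm.trans (latticeSum_eq_two_mul_sum_stripe hq))

section Stripes

variable {K : Type*} [NormedField K] [CompleteSpace K] {q : K}

theorem latticeSum_stripe_zero (hq : ‖q‖ < 1) : latticeSum q (stripe 0) =
    ramanujanTheta (-(q ^ 3) ^ 8) (-(q ^ 3) ^ 7) * ramanujanTheta (-q ^ 4) (-q ^ 1) := by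
  simpa [triangularTerm, triangular] using
    latticeSum_stripe (q := q) (u := 0) (v := 0) (r := 8) (s := 7) (r' := 4) (s' := 1) hq
      (by norm_num) (by norm_num) (by norm_num) (by norm_num)

theorem latticeSum_stripe_five (hq : ‖q‖ < 1) : latticeSum q (stripe 5) =
    -q ^ 3 *
      (ramanujanTheta (-(q ^ 3) ^ 2) (-(q ^ 3) ^ 13) * ramanujanTheta (-q ^ 4) (-q ^ 1)) := by
  rw [ramanujanTheta_comm (-(q ^ 3) ^ 2)]
  simpa [triangularTerm, triangular] using
    latticeSum_stripe (q := q) (u := 2) (v := -1) (r := 13) (s := 2) (r' := 4) (s' := 1) hq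
      (by norm_num) (by norm_num) (by norm_num) (by norm_num)

theorem latticeSum_stripe_three (hq : ‖q‖ < 1) : latticeSum q (stripe 3) =
    q * (ramanujanTheta (-(q ^ 3) ^ 11) (-(q ^ 3) ^ 4) * ramanujanTheta (-q ^ 3) (-q ^ 2)) := by
  simpa [triangularTerm, triangular] using
    latticeSum_stripe (q := q) (u := 1) (v := -1) (r := 11) (s := 4) (r' := 3) (s' := 2) hq
      (by norm_num) (by norm_num) (by norm_num) (by norm_num)

theorem latticeSum_stripe_neg_seven (hq : ‖q‖ < 1) : latticeSum q (stripe (-7)) =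
    q ^ 4 * (ramanujanTheta (-(q ^ 3) ^ 1) (-(q ^ 3) ^ 14) * ramanujanTheta (-q ^ 3) (-q ^ 2)) := by
  have prefactor : triangularTerm q (-3) * triangularTerm q 1 = q ^ 4 := by
    have sign : (-1 : K) ^ (-3 : ℤ) = -1 := by norm_num [zpow_neg]
    have exponents : triangular (-3) = 3 ∧ triangular 1 = 1 := by decide
    rw [triangularTerm, triangularTerm, sign, exponents.1, exponents.2, zpow_one]
    ring
  rw [← prefactor]
  exact latticeSum_stripe (u := -3) (v := 1) (r := 1) (s := 14) (r' := 3) (s' := 2) hq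
    (by norm_num) (by norm_num) (by norm_num) (by norm_num)

theorem latticeSum_stripe_two [CharZero K] (hq : ‖q‖ < 1) : latticeSum q (stripe 2) = 0 := by
  simpa [ramanujanTheta_neg_neg_one] using
    latticeSum_stripe (q := q) (u := 1) (v := 0) (r := 10) (s := 5) (r' := 5) (s' := 0) hq
      (by norm_num) (by norm_num) (by norm_num) (by norm_num)

end Stripes

theorem branching_V_Lambda0 (q : ℂ) (hq : ‖q‖ < 1) :
    eulerPhi (q ^ 3) ^ 2 =
      Gf (q ^ 3) * eulerPhi q * rrA q + q * Hf (q ^ 3) * eulerPhi q * rrB q := by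
  rcases eq_or_ne q 0 with rfl | hq₀
  · simp [eulerPhi, Gf, rrA]
  have hq₀' : q ^ 3 ≠ 0 := pow_ne_zero 3 hq₀
  have hq' : ‖q ^ 3‖ < 1 := norm_pow_lt_one hq three_ne_zero
  calc eulerPhi (q ^ 3) ^ 2 = ∑ c ∈ {0, 5, 3, -7, 2}, latticeSum q (stripe c) :=
        sq_eulerPhi_eq_sum_stripe hq₀ hq
    _ = Gf (q ^ 3) * (eulerPhi q * rrA q) + q * Hf (q ^ 3) * (eulerPhi q * rrB q) := by
        rw [Gf_eq_ramanujanTheta hq₀' hq', Hf_eq_ramanujanTheta hq₀' hq',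
          eulerPhi_mul_rrA hq₀ hq, eulerPhi_mul_rrB hq₀ hq, Finset.sum_insert (by decide),
          Finset.sum_insert (by decide), Finset.sum_insert (by decide),
          Finset.sum_insert (by decide), Finset.sum_singleton, latticeSum_stripe_zero hq,
          latticeSum_stripe_five hq, latticeSum_stripe_three hq,
          latticeSum_stripe_neg_seven hq, latticeSum_stripe_two hq]
        ring
    _ = _ := by ring
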